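/- Let λ > 0 and let U, V be independent standard Gaussian random vectors on ℝ². Then the law of λ U·V has density f(s) = e^{−|s|/λ}/(2λ) with respect to Lebesgue measure on ℝ, i.e. λ U·V has the Laplace distribution with scale λ. -/

import Mathlib

open MeasureTheory ProbabilityTheory Matrix Real
open scoped ENNReal

/-- The standard Gaussian measure on `ι → ℝ`: the centered Gaussian measure with identity
covariance, i.e. the product of copies of `N(0,1)`. -/
noncomputable def stdGaussian (ι : Type*) [Fintype ι] : Measure (ι → ℝ) :=
  Measure.pi fun _ => gaussianReal 0 1

/-! Both laws are determined by their characteristic functions. A product of two independent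
`N(0, 1)` variables has characteristic function `t ↦ (1 + t ^ 2) ^ (-1/2)`: conditionally on one
factor `x` it is Gaussian with variance `x ^ 2`, so what remains is the Gaussian integral of
`exp (-t ^ 2 * x ^ 2 / 2)`. The dot product in dimension two is a sum of two independent such
products, so its characteristic function is `t ↦ (1 + t ^ 2)⁻¹`, which is that of the Laplace
distribution of scale `1`. -/

open scoped NNReal

section DotProduct

lemma charFun_map_mul_prod (μ ν : Measure ℝ) [IsFiniteMeasure μ] [IsFiniteMeasure ν] (t : ℝ) :
    charFun ((μ.prod ν).map fun p => p.1 * p.2) t = ∫ x, charFun ν (t * x) ∂μ := by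
  have hint : Integrable (fun p : ℝ × ℝ => Complex.exp (t * (p.1 * p.2 : ℝ) * Complex.I))
      (μ.prod ν) := by
    refine .of_bound (C := 1) (by fun_prop) (ae_of_all _ fun p => ?_)
    rw [← Complex.ofReal_mul, Complex.norm_exp_ofReal_mul_I]
  rw [charFun_apply_real, integral_map (by fun_prop) (by fun_prop), integral_prod _ hint]
  simp only [charFun_apply_real, Complex.ofReal_mul, mul_assoc]

variable {ι : Type*} [Fintype ι]

lemma measurable_dotProduct :
    Measurable fun p : (ι → ℝ) × (ι → ℝ) => p.1 ⬝ᵥ p.2 := by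
  unfold dotProduct
  fun_prop

lemma map_dotProduct_pi_prod_pi (μ ν : ι → Measure ℝ) [∀ i, IsFiniteMeasure (μ i)]
    [∀ i, IsFiniteMeasure (ν i)] :
    ((Measure.pi μ).prod (Measure.pi ν)).map (fun p => p.1 ⬝ᵥ p.2) =
      (Measure.pi fun i => ((μ i).prod (ν i)).map fun p => p.1 * p.2).map fun z => ∑ i, z i := by
  rw [← (measurePreserving_arrowProdEquivProdArrow ℝ ℝ ι μ ν).map_eq,
    Measure.map_map measurable_dotProduct (MeasurableEquiv.measurable _),
    ← Measure.pi_map_pi (fun i => by fun_prop), Measure.map_map (by fun_prop) (by fun_prop)]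
  rfl

lemma charFun_map_dotProduct_pi_prod_pi (μ ν : ι → Measure ℝ) [∀ i, IsProbabilityMeasure (μ i)]
    [∀ i, IsProbabilityMeasure (ν i)] (t : ℝ) :
    charFun (((Measure.pi μ).prod (Measure.pi ν)).map fun p => p.1 ⬝ᵥ p.2) t =
      ∏ i, ∫ x, charFun (ν i) (t * x) ∂μ i := by
  have (i : ι) : IsProbabilityMeasure (((μ i).prod (ν i)).map fun p => p.1 * p.2) :=
    Measure.isProbabilityMeasure_map (by fun_prop)
  simp only [map_dotProduct_pi_prod_pi, charFun_map_sum_pi_eq_prod, Finset.prod_apply,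
    charFun_map_mul_prod]

end DotProduct

section Gaussian

lemma integral_exp_neg_mul_sq_gaussianReal (v : ℝ≥0) (c : ℝ) :
    ∫ x, exp (-c * x ^ 2) ∂gaussianReal 0 v = (√(1 + 2 * v * c))⁻¹ := by
  obtain rfl | hv := eq_or_ne v 0
  · simp
  have : (0 : ℝ) < v := by positivity
  have hdensity (x : ℝ) : gaussianPDFReal 0 v x • exp (-c * x ^ 2) =
      (√(2 * π * v))⁻¹ * exp (-((1 + 2 * v * c) / (2 * v)) * x ^ 2) := by
    rw [gaussianPDFReal_def, smul_eq_mul, mul_assoc, ← exp_add]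
    congr 2
    field_simp
    ring
  simp only [integral_gaussianReal_eq_integral_smul hv, hdensity]
  rw [integral_const_mul, integral_gaussian, ← sqrt_inv, ← sqrt_inv, ← sqrt_mul (by positivity)]
  congr 1
  field_simp

lemma integral_charFun_gaussianReal (v w : ℝ≥0) (t : ℝ) :
    ∫ x, charFun (gaussianReal 0 w) (t * x) ∂gaussianReal 0 v =
      ((√(1 + v * w * t ^ 2))⁻¹ : ℝ) := by
  have hchar (x : ℝ) : charFun (gaussianReal 0 w) (t * x) =
      (exp (-(w * t ^ 2 / 2) * x ^ 2) : ℝ) := by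
    rw [charFun_gaussianReal]
    push_cast
    congr 1
    ring
  simp only [hchar]
  rw [integral_complex_ofReal, integral_exp_neg_mul_sq_gaussianReal]
  congr 4
  ring

lemma charFun_map_dotProduct_stdGaussian (ι : Type*) [Fintype ι] (t : ℝ) :
    charFun (((stdGaussian ι).prod (stdGaussian ι)).map fun p => p.1 ⬝ᵥ p.2) t =
      ((√(1 + t ^ 2))⁻¹ ^ Fintype.card ι : ℝ) := by
  simp [_root_.stdGaussian, charFun_map_dotProduct_pi_prod_pi, integral_charFun_gaussianReal]

end Gaussian

section Laplace

lemma integral_cexp_mul_sub_mul_abs {w z : ℂ} (h : |w.re| < z.re) :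
    ∫ s : ℝ, Complex.exp (w * s - z * |s|) = 2 * z / (z ^ 2 - w ^ 2) := by
  obtain ⟨hneg, hpos⟩ := abs_lt.1 h
  have hadd : 0 < (w + z).re := by rw [Complex.add_re]; linarith
  have hsub : (w - z).re < 0 := by rw [Complex.sub_re]; linarith
  have hadd_ne : w + z ≠ 0 := fun h0 => by simp [h0] at hadd
  have hsub_ne : w - z ≠ 0 := fun h0 => by simp [h0] at hsub
  have hIic : Set.EqOn (fun s : ℝ => Complex.exp (w * s - z * |s|))
      (fun s => Complex.exp ((w + z) * s)) (Set.Iic 0) := fun s hs => by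
    simp only [abs_of_nonpos (Set.mem_Iic.1 hs), Complex.ofReal_neg]
    ring_nf
  have hIoi : Set.EqOn (fun s : ℝ => Complex.exp (w * s - z * |s|))
      (fun s => Complex.exp ((w - z) * s)) (Set.Ioi 0) := fun s hs => by
    simp only [abs_of_pos (Set.mem_Ioi.1 hs)]
    ring_nf
  rw [← intervalIntegral.integral_Iic_add_Ioi
      ((integrableOn_exp_mul_complex_Iic hadd 0).congr_fun hIic.symm measurableSet_Iic)
      ((integrableOn_exp_mul_complex_Ioi hsub 0).congr_fun hIoi.symm measurableSet_Ioi),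
    setIntegral_congr_fun measurableSet_Iic hIic, setIntegral_congr_fun measurableSet_Ioi hIoi,
    integral_exp_mul_complex_Iic hadd, integral_exp_mul_complex_Ioi hsub,
    show z ^ 2 - w ^ 2 = -((w + z) * (w - z)) by ring]
  simp only [Complex.ofReal_zero, mul_zero, Complex.exp_zero]
  field_simp
  ring

/-- The density of the Laplace distribution with mean `0` and scale `b`, meaningful for `0 < b`. -/
noncomputable def laplacePDFReal (b s : ℝ) : ℝ :=
  exp (-|s| / b) / (2 * b)

/-- The Laplace distribution with mean `0` and scale `b`. It is a probability measure for `0 < b`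
only. -/
noncomputable def laplaceMeasure (b : ℝ) : Measure ℝ :=
  volume.withDensity fun s => ENNReal.ofReal (laplacePDFReal b s)

variable {b : ℝ}

lemma charFun_laplaceMeasure (hb : 0 < b) (t : ℝ) :
    charFun (laplaceMeasure b) t = ((1 + (b * t) ^ 2)⁻¹ : ℝ) := by
  have hmeas : Measurable fun s => ENNReal.ofReal (laplacePDFReal b s) := by
    unfold laplacePDFReal
    fun_prop
  have hnonneg (s : ℝ) : 0 ≤ laplacePDFReal b s := by
    unfold laplacePDFReal
    positivity
  have hdensity (s : ℝ) : (ENNReal.ofReal (laplacePDFReal b s)).toReal •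
      Complex.exp (t * s * Complex.I) =
        (2 * b : ℂ)⁻¹ * Complex.exp (t * Complex.I * s - (b : ℂ)⁻¹ * |s|) := by
    rw [ENNReal.toReal_ofReal (hnonneg s), Complex.real_smul, laplacePDFReal]
    push_cast
    rw [div_mul_eq_mul_div, ← Complex.exp_add, div_eq_inv_mul]
    ring_nf
  have hre : |(t * Complex.I).re| < ((b : ℂ)⁻¹).re := by
    rw [← Complex.ofReal_inv]
    simpa using hb
  rw [charFun_apply_real, laplaceMeasure, integral_withDensity_eq_integral_toReal_smul hmeas
    (ae_of_all _ fun _ => ENNReal.ofReal_lt_top)]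
  simp only [hdensity]
  rw [integral_const_mul, integral_cexp_mul_sub_mul_abs hre, mul_pow, Complex.I_sq]
  have hb' : (b : ℂ) ≠ 0 := by exact_mod_cast hb.ne'
  push_cast
  field_simp
  ring

lemma isProbabilityMeasure_laplaceMeasure (hb : 0 < b) :
    IsProbabilityMeasure (laplaceMeasure b) := by
  have hchar := charFun_laplaceMeasure hb 0
  rw [charFun_zero] at hchar
  exact isProbabilityMeasure_iff_real.2 (by simpa using hchar)

end Laplace

/-- Let `λ > 0` and let `U, V` be independent standard Gaussian random
vectors on `ℝ²`.  Then the law of `λ U·V` has density `s ↦ e^{−|s|/λ}/(2λ)` with respect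
to Lebesgue measure on `ℝ`, i.e. `λ U·V` is Laplace-distributed with scale `λ`. -/
theorem stmt_4 {Ω : Type*} [MeasurableSpace Ω] (P : Measure Ω) [IsProbabilityMeasure P]
    (lam : ℝ) (hlam : 0 < lam)
    (U V : Ω → (Fin 2 → ℝ)) (hU : Measurable U) (hV : Measurable V)
    (hUlaw : P.map U = stdGaussian (Fin 2)) (hVlaw : P.map V = stdGaussian (Fin 2))
    (hUV : IndepFun U V P) :
    P.map (fun ω => lam * (U ω ⬝ᵥ V ω)) =
      (volume : Measure ℝ).withDensity
        (fun s => ENNReal.ofReal (Real.exp (-|s| / lam) / (2 * lam))) := by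
  have hUVlaw : P.map (fun ω => (U ω, V ω)) =
      (stdGaussian (Fin 2)).prod (stdGaussian (Fin 2)) := by
    rw [hUV.map_prod_eq_prod_map_map hU.aemeasurable hV.aemeasurable, hUlaw, hVlaw]
  have hdot : Measurable fun ω => U ω ⬝ᵥ V ω := measurable_dotProduct.comp (hU.prodMk hV)
  have := Measure.isProbabilityMeasure_map (hdot.const_mul lam).aemeasurable (μ := P)
  have := isProbabilityMeasure_laplaceMeasure hlam
  change _ = laplaceMeasure lam
  refine Measure.ext_of_charFun (funext fun t => ?_)
  calc charFun (P.map fun ω => lam * (U ω ⬝ᵥ V ω)) t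
      = charFun (P.map fun ω => U ω ⬝ᵥ V ω) (lam * t) :=
        charFun_map_mul_comp hdot.aemeasurable lam t
    _ = charFun (((stdGaussian (Fin 2)).prod (stdGaussian (Fin 2))).map fun p => p.1 ⬝ᵥ p.2)
          (lam * t) := by
        rw [← hUVlaw, Measure.map_map measurable_dotProduct (hU.prodMk hV), Function.comp_def]
    _ = ((1 + (lam * t) ^ 2)⁻¹ : ℝ) := by
        rw [charFun_map_dotProduct_stdGaussian, Fintype.card_fin, inv_pow, sq_sqrt (by positivity)]
    _ = charFun (laplaceMeasure lam) t := (charFun_laplaceMeasure hlam t).symm
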